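/- arXiv:2311.13582 — 2 statements merged into one kernel-verified Lean document; each statement's English description precedes it below -/
import Mathlib

section
/- Let m ≥ 1 and n ≥ 0, and let G_1, …, G_n be graphs. For each i with 1 ≤ i ≤ n, let G'_i = G_i − w_i for some vertex w_i of G_i, and let r_1, …, r_n be integers such that r_i ≥ R(C_4, …, C_4, G_1, …, G_{i−1}, G'_i, G_{i+1}, …, G_n) (with m copies of C_4). Assume that R(C_4, …, C_4, G_1, …, G_n) (with m copies of C_4) > max_{1 ≤ i ≤ n} |V(G_i)|, and assume moreover that if m = 1 then G_i ≠ K_2 for some i ∈ {1, …, n}. Then R(P_3, C_4, …, C_4, G_1, …, G_n) (with m−1 copies of C_4) ≤ (Σ_{i=1}^n r_i) − n + (m² + m)/2 + ⌈ m · √( (m+1)²/4 + (Σ_{i=1}^n r_i) − n ) ⌉. -/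
open SimpleGraph

/-- A graph bundled with its vertex type. -/
structure VGraph : Type 1 where
  V : Type
  G : SimpleGraph V

/-- The cycle `C₄` as a bundled graph. -/
def C4 : VGraph := ⟨Fin 4, SimpleGraph.cycleGraph 4⟩

/-- The path `P₃` (on 3 vertices) as a bundled graph. -/
def P3 : VGraph := ⟨Fin 3, SimpleGraph.pathGraph 3⟩

/-- The complete graph `K_k` as a bundled graph. -/
def Kc (k : ℕ) : VGraph := ⟨Fin k, ⊤⟩

/-- The star `K_{1,k}`: vertex `0` is the center, joined to the `k` leaves. -/
def starGraph (k : ℕ) : SimpleGraph (Fin (k + 1)) :=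
  SimpleGraph.fromRel (fun u _ => u = 0)

/-- The book `B_k = K₂ + kK₁`: vertices `0, 1` form the spine, joined
to everything; the `k` pages are pairwise nonadjacent. -/
def bookGraph (k : ℕ) : SimpleGraph (Fin (k + 2)) :=
  SimpleGraph.fromRel (fun u _ => u.val < 2)

/-- Deletion of a vertex (with all incident edges) from a bundled graph. -/
def VGraph.delete (X : VGraph) (w : X.V) : VGraph :=
  ⟨{v : X.V // v ≠ w}, X.G.induce {v | v ≠ w}⟩

/-- Disjoint union with a single isolated vertex, `G ∪ K₁`. -/
def VGraph.addK1 (X : VGraph) : VGraph :=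
  ⟨Option X.V, SimpleGraph.fromRel (fun u v => ∃ a b, u = some a ∧ v = some b ∧ X.G.Adj a b)⟩

/-- `ramseyProp l N` : every coloring of the edges of the complete graph on `N`
vertices with `l.length` colors admits, for some color `i`, a subgraph isomorphic
to the `i`-th graph of `l` all of whose edges have color `i`. -/
def ramseyProp (l : List VGraph) (N : ℕ) : Prop :=
  ∀ c : Sym2 (Fin N) → Fin l.length,
    ∃ (i : Fin l.length) (f : (l.get i).V ↪ Fin N),
      ∀ u v, (l.get i).G.Adj u v → c s(f u, f v) = i

/-- The Ramsey number of a list of graphs: the least positive `N`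
satisfying `ramseyProp l N`. -/
noncomputable def ramseyNumber (l : List VGraph) : ℕ :=
  sInf {N | 0 < N ∧ ramseyProp l N}

/-!
Let `c` be a coloring of the complete graph on `N` vertices without the prescribed monochromatic
graphs. The neighborhood of a vertex `v` in the color of `Gᵢ` has fewer than `rᵢ` vertices, since
a copy of `Gᵢ - wᵢ` inside it extends by `v` to a copy of `Gᵢ`, and a color without `P₃` or `C₄`
is a color without `C₄`. As `v` has at most one neighbor in the color of `P₃`, at least
`N - 2 - ∑ᵢ (rᵢ - 1)` of its edges have one of the `m - 1` colors without `C₄`. In each of these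
two vertices have at most one common neighbor, so counting pairs of neighbors and applying
Cauchy–Schwarz gives a quadratic inequality in `N`, which fails at the claimed bound.
-/

section FreeGraphs

variable {V W : Type*} {G : SimpleGraph V}

theorem isContained_of_induce_ne_isContained_induce_neighborSet {H : SimpleGraph W} {w : W}
    {v : V} (h : H.induce {x | x ≠ w} ⊑ G.induce (G.neighborSet v)) : H ⊑ G := by
  classical
  obtain ⟨f⟩ := h
  let F : W → V := fun x ↦ if hx : x = w then v else f ⟨x, hx⟩
  have F_self : F w = v := dif_pos rfl
  have F_of_ne {x : W} (hx : x ≠ w) : F x = f ⟨x, hx⟩ := dif_neg hx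
  have adj_F {x : W} (hx : x ≠ w) : G.Adj v (F x) := F_of_ne hx ▸ (f ⟨x, hx⟩).2
  refine ⟨⟨⟨F, fun {a b} hab ↦ ?_⟩, fun a b hab ↦ ?_⟩⟩
  · rcases eq_or_ne a w with rfl | ha
    · exact F_self.symm ▸ adj_F hab.ne'
    rcases eq_or_ne b w with rfl | hb
    · exact F_self.symm ▸ (adj_F ha).symm
    · rw [F_of_ne ha, F_of_ne hb]
      exact f.toHom.map_adj (v := ⟨a, ha⟩) (w := ⟨b, hb⟩) hab
  · change F a = F b at hab
    rcases eq_or_ne a w with rfl | ha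
    · by_contra hb
      exact (adj_F (Ne.symm hb)).ne (F_self.symm.trans hab)
    rcases eq_or_ne b w with rfl | hb
    · exact absurd (F_self.symm.trans hab.symm) (adj_F ha).ne
    · rw [F_of_ne ha, F_of_ne hb] at hab
      exact congrArg Subtype.val (f.injective (Subtype.ext hab))

theorem pathGraph_isContained_pathGraph {m n : ℕ} (h : m ≤ n) : pathGraph m ⊑ pathGraph n :=
  ⟨⟨⟨Fin.castLE h, fun huv ↦ by simpa [pathGraph_adj] using huv⟩, Fin.castLE_injective h⟩⟩

theorem degree_le_one_of_pathGraph_three_free (h : (pathGraph 3).Free G) (v : V)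
    [Fintype (G.neighborSet v)] : G.degree v ≤ 1 := by
  rw [← card_neighborFinset_eq_degree, Finset.card_le_one]
  intro a ha b hb
  rw [mem_neighborFinset] at ha hb
  by_contra hab
  let p : G.Walk a b := .cons ha.symm (.cons hb .nil)
  have hp : p.IsPath := by simp [p, Walk.cons_isPath_iff, ha.ne', hb.ne, hab]
  exact h hp.isContained_pathGraph

theorem subsingleton_commonNeighbors_of_cycleGraph_four_free (h : (cycleGraph 4).Free G) {a b : V}
    (hab : a ≠ b) : (G.commonNeighbors a b).Subsingleton := by
  intro v hv w hw
  rw [mem_commonNeighbors] at hv hw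
  by_contra hvw
  let p : G.Walk a a := .cons hv.1 (.cons hv.2.symm (.cons hw.2 (.cons hw.1.symm .nil)))
  have hp : p.IsCycle := by
    simp [p, Walk.cons_isCycle_iff, Walk.cons_isPath_iff, hab, hab.symm, hvw, hv.1.ne', hw.1.ne',
      hv.2.ne', hw.2.ne, hv.1.ne, hw.1.ne]
  exact h ((cycleGraph_isContained_iff (by norm_num)).2 ⟨a, p, hp, rfl⟩)

variable [Fintype V]

theorem sum_degree_mul_pred_le_of_cycleGraph_four_free [DecidableRel G.Adj]
    (h : (cycleGraph 4).Free G) :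
    ∑ v, (G.degree v : ℤ) * (G.degree v - 1) ≤ Fintype.card V * (Fintype.card V - 1) := by
  classical
  have cast_card_offDiag (s : Finset V) : (s.offDiag.card : ℤ) = s.card * (s.card - 1) := by
    rw [Finset.offDiag_card, Nat.cast_sub (Nat.le_mul_self _)]
    push_cast
    ring
  have hdisj : (Set.univ : Set V).PairwiseDisjoint fun v ↦ (G.neighborFinset v).offDiag := by
    intro v _ w _ hvw
    refine Finset.disjoint_left.2 fun ⟨a, b⟩ hv hw ↦ hvw ?_
    simp only [Finset.mem_offDiag, mem_neighborFinset] at hv hw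
    exact subsingleton_commonNeighbors_of_cycleGraph_four_free h hv.2.2
      ⟨hv.1.symm, hv.2.1.symm⟩ ⟨hw.1.symm, hw.2.1.symm⟩
  have hcard : ∑ v, (G.neighborFinset v).offDiag.card ≤ (Finset.univ : Finset V).offDiag.card := by
    rw [← Finset.card_biUnion fun v _ w _ hvw ↦ hdisj trivial trivial hvw]
    exact Finset.card_le_card <| Finset.biUnion_subset.2 fun v _ ↦
      Finset.offDiag_mono (Finset.subset_univ _)
  simpa only [Nat.cast_sum, cast_card_offDiag, card_neighborFinset_eq_degree,
    Finset.card_univ] using Int.ofNat_le.2 hcard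

theorem mul_sub_card_le_of_forall_cycleGraph_four_free [Nonempty V] {κ : Type*} [Fintype κ]
    {H : κ → SimpleGraph V} [∀ k, DecidableRel (H k).Adj] (hH : ∀ k, (cycleGraph 4).Free (H k))
    {D : ℤ} (hκ : Fintype.card κ ≤ D) (hD : ∀ v, D ≤ ∑ k, ((H k).degree v : ℤ)) :
    D * (D - Fintype.card κ) ≤ (Fintype.card κ : ℤ) ^ 2 * (Fintype.card V - 1) := by
  have hvertex (v : V) : D * (D - Fintype.card κ) ≤
      Fintype.card κ * ∑ k, ((H k).degree v : ℤ) * ((H k).degree v - 1) := by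
    have hcs := sq_sum_le_card_mul_sum_sq (s := Finset.univ) (f := fun k ↦ ((H k).degree v : ℤ))
    rw [Finset.card_univ] at hcs
    simp only [mul_sub_one, Finset.sum_sub_distrib, ← sq]
    nlinarith [hD v]
  have hV : (0 : ℤ) < Fintype.card V := by exact_mod_cast Fintype.card_pos
  refine le_of_mul_le_mul_left ?_ hV
  calc
    _ = ∑ _v : V, D * (D - Fintype.card κ) := by simp
    _ ≤ ∑ v, Fintype.card κ * ∑ k, ((H k).degree v : ℤ) * ((H k).degree v - 1) :=
      Finset.sum_le_sum fun v _ ↦ hvertex v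
    _ = Fintype.card κ * ∑ k, ∑ v, ((H k).degree v : ℤ) * ((H k).degree v - 1) := by
      rw [← Finset.mul_sum, Finset.sum_comm]
    _ ≤ Fintype.card κ * ∑ _k : κ, (Fintype.card V : ℤ) * (Fintype.card V - 1) := by
      gcongr with k
      exact sum_degree_mul_pred_le_of_cycleGraph_four_free (hH k)
    _ = _ := by
      simp only [Finset.sum_const, Finset.card_univ, nsmul_eq_mul]
      ring

end FreeGraphs

section Coloring

variable {V W ι : Type*}

/-- The graph of the edges to which the edge coloring `c` gives color `i`. The colors of the
diagonal elements of `Sym2 V` are ignored. -/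
def colorClass (c : Sym2 V → ι) (i : ι) : SimpleGraph V :=
  fromEdgeSet (c ⁻¹' {i})

instance [DecidableEq V] [DecidableEq ι] (c : Sym2 V → ι) (i : ι) :
    DecidableRel (colorClass c i).Adj :=
  fun u v ↦ inferInstanceAs (Decidable (c s(u, v) = i ∧ u ≠ v))

theorem isContained_colorClass_iff {c : Sym2 V → ι} {i : ι} {H : SimpleGraph W} :
    H ⊑ colorClass c i ↔ ∃ f : W ↪ V, ∀ u v, H.Adj u v → c s(f u, f v) = i := by
  rw [isContained_iff_exists_le_comap]
  exact exists_congr fun f ↦ forall₂_congr fun u v ↦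
    ⟨fun h huv ↦ (h huv).1, fun h huv ↦ ⟨h huv, f.injective.ne huv.ne⟩⟩

theorem colorClass_comp_sym2Map (c : Sym2 V → ι) (i : ι) (f : W ↪ V) :
    colorClass (c ∘ Sym2.map f) i = (colorClass c i).comap f := by
  ext u v
  simp [colorClass]

theorem sum_degree_colorClass_add_one [Fintype V] [DecidableEq V] [Fintype ι] [DecidableEq ι]
    (c : Sym2 V → ι) (v : V) : ∑ i, (colorClass c i).degree v + 1 = Fintype.card V := by
  have hfiber (i : ι) : (colorClass c i).neighborFinset v =
      {u ∈ Finset.univ.erase v | c s(v, u) = i} := by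
    ext u
    rw [mem_neighborFinset, Finset.mem_filter, Finset.mem_erase]
    simp [colorClass, and_comm, eq_comm]
  simp only [← card_neighborFinset_eq_degree, hfiber]
  rw [← Finset.card_eq_sum_card_fiberwise fun _ _ ↦ Finset.mem_univ _,
    Finset.card_erase_add_one (Finset.mem_univ v), Finset.card_univ]

/-- The arrow relation `V → (Y i)ᵢ` of Ramsey theory: every edge coloring of the complete graph on
`V` contains a copy of `Y i` in color `i`, for some `i`. It is `ramseyProp` for an arbitrary
vertex type and an arbitrary type of colors. -/
def Arrows (V : Type*) {ι : Type*} (Y : ι → VGraph) : Prop :=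
  ∀ c : Sym2 V → ι, ∃ i, (Y i).G ⊑ colorClass c i

namespace Arrows

variable {Y Z : ι → VGraph}

theorem of_embedding (h : Arrows W Y) (f : W ↪ V) : Arrows V Y := by
  intro c
  obtain ⟨i, hi⟩ := h (c ∘ Sym2.map f)
  rw [colorClass_comp_sym2Map] at hi
  exact ⟨i, hi.trans (Embedding.comap f _).isContained⟩

theorem of_isContained (h : Arrows V Y) (hZ : ∀ i, (Z i).G ⊑ (Y i).G) : Arrows V Z :=
  fun c ↦ (h c).imp fun i hi ↦ (hZ i).trans hi

theorem degree_colorClass_lt [Fintype V] [DecidableEq V] [DecidableEq ι] {j : ι} {w : (Y j).V}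
    {R : ℕ} (h : Arrows (Fin R) (Function.update Y j ((Y j).delete w))) {c : Sym2 V → ι}
    (hc : ∀ i, (Y i).G.Free (colorClass c i)) (v : V) : (colorClass c j).degree v < R := by
  by_contra! hR
  set S := (colorClass c j).neighborSet v
  rw [← card_neighborSet_eq_degree, ← Fintype.card_fin R] at hR
  obtain ⟨i, hi⟩ := h.of_embedding (Function.Embedding.nonempty_of_card_le hR).some
    (c ∘ Sym2.map (Function.Embedding.subtype (· ∈ S)))
  rw [colorClass_comp_sym2Map] at hi
  rcases eq_or_ne i j with rfl | hij
  · rw [Function.update_self] at hi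
    exact hc i (isContained_of_induce_ne_isContained_induce_neighborSet hi)
  · rw [Function.update_of_ne hij] at hi
    exact hc i (hi.trans (Embedding.comap _ _).isContained)

end Arrows

theorem delete_isContained (Y : VGraph) (w : Y.V) : (Y.delete w).G ⊑ Y.G :=
  (Embedding.induce _).isContained

theorem P3_isContained_C4 : P3.G ⊑ C4.G :=
  (pathGraph_isContained_pathGraph (by norm_num)).mono_right pathGraph_le_cycleGraph

theorem arrows_cons_P3 [Fintype V] [Nonempty V] [Fintype ι] [DecidableEq ι] {M : ℕ}
    {X : ι → VGraph} {w : ∀ i, (X i).V} {d : ι → ℕ}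
    (hd : ∀ i, Arrows (Fin (d i + 1)) (Sum.elim (fun _ : Fin (M + 1) ↦ C4)
      (Function.update X i ((X i).delete (w i)))))
    {D : ℤ} (hMD : M ≤ D) (hD : D + 2 + ∑ i, (d i : ℤ) ≤ Fintype.card V)
    (hlt : (M : ℤ) ^ 2 * (Fintype.card V - 1) < D * (D - M)) :
    Arrows V (Sum.elim (Fin.cons P3 fun _ : Fin M ↦ C4) X) := by
  classical
  by_contra! hnot
  obtain ⟨c, hc⟩ : ∃ c, ∀ i, (Sum.elim (Fin.cons P3 fun _ : Fin M ↦ C4) X i).G.Free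
      (colorClass c i) := by simpa [Arrows] using hnot
  have hP3 : P3.G.Free (colorClass c (.inl 0)) := hc (.inl 0)
  have hC4 (j : Fin M) : C4.G.Free (colorClass c (.inl j.succ)) := hc (.inl j.succ)
  have hC4X : ∀ i, (Sum.elim (fun _ : Fin (M + 1) ↦ C4) X i).G.Free (colorClass c i) := by
    rintro (j | i)
    · exact Fin.cases (fun h ↦ hP3 (P3_isContained_C4.trans h)) hC4 j
    · exact hc (.inr i)
  have hX (i : ι) (v : V) : (colorClass c (.inr i)).degree v ≤ d i := by
    have h := hd i
    rw [Sum.elim_update_right] at h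
    exact Nat.lt_succ_iff.1 (h.degree_colorClass_lt hC4X v)
  have hdegree (v : V) : D ≤ ∑ j : Fin M, ((colorClass c (.inl j.succ)).degree v : ℤ) := by
    have htotal := sum_degree_colorClass_add_one c v
    rw [Fintype.sum_sum_type, Fin.sum_univ_succ] at htotal
    have hP3v := degree_le_one_of_pathGraph_three_free hP3 v
    have hXv := Finset.sum_le_sum fun i (_ : i ∈ Finset.univ) ↦ hX i v
    zify at htotal hP3v hXv
    linarith
  have hcount := mul_sub_card_le_of_forall_cycleGraph_four_free hC4 (by simpa using hMD) hdegree
  rw [Fintype.card_fin] at hcount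
  exact hcount.not_gt hlt

end Coloring

section Arithmetic

-- The left-hand side of `hy` is the larger root of `y ^ 2 - m * (m + 1) * y - m ^ 2 * s`.
theorem le_and_sq_mul_le_of_root_le {m s y : ℝ} (hm : 0 ≤ m) (hs : 0 ≤ s)
    (hy : (m ^ 2 + m) / 2 + m * √((m + 1) ^ 2 / 4 + s) ≤ y) :
    m * (m + 1) ≤ y ∧ m ^ 2 * s ≤ y * (y - m * (m + 1)) := by
  set q := √((m + 1) ^ 2 / 4 + s)
  have hq_sq : q ^ 2 = (m + 1) ^ 2 / 4 + s := Real.sq_sqrt (by positivity)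
  have hq : (m + 1) / 2 ≤ q := Real.le_sqrt_of_sq_le (by linarith)
  have hmq : m * ((m + 1) / 2) ≤ m * q := by gcongr
  have hsq : (m * q) ^ 2 ≤ (y - (m ^ 2 + m) / 2) ^ 2 := by
    gcongr
    linarith
  rw [mul_pow, hq_sq] at hsq
  constructor <;> linarith

theorem sub_one_sq_mul_lt_of_sq_mul_le {m s y : ℤ} (hm : 1 ≤ m) (hs : m = 1 → 0 < s)
    (hy : m * (m + 1) ≤ y) (hsy : m ^ 2 * s ≤ y * (y - m * (m + 1))) :
    (m - 1) ^ 2 * (s + y - 1) < (y - 2) * (y - 1 - m) := by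
  rcases hm.eq_or_lt with rfl | hm
  · have hs' := hs rfl
    nlinarith
  · have hsy' : (m - 1) ^ 2 * (m ^ 2 * s) ≤ (m - 1) ^ 2 * (y * (y - m * (m + 1))) := by gcongr
    have hquad : 0 ≤ y * ((2 * m - 1) * y - m * (5 * m - 1)) :=
      mul_nonneg (by nlinarith) (by nlinarith)
    refine lt_of_mul_lt_mul_left ?_ (sq_nonneg m)
    linarith [pow_pos (one_pos.trans hm) 2, pow_pos (one_pos.trans hm) 4]

end Arithmetic

theorem arrows_cons_P3_of_root_le {V ι : Type*} [Fintype V] [Fintype ι] [DecidableEq ι] {M : ℕ}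
    {X : ι → VGraph} {w : ∀ i, (X i).V} {d : ι → ℕ}
    (hd : ∀ i, Arrows (Fin (d i + 1)) (Sum.elim (fun _ : Fin (M + 1) ↦ C4)
      (Function.update X i ((X i).delete (w i)))))
    (hM : M = 0 → ∃ i, 0 < d i)
    (hV : (((M : ℝ) + 1) ^ 2 + (M + 1)) / 2 +
      (M + 1) * √(((M : ℝ) + 1 + 1) ^ 2 / 4 + ∑ i, (d i : ℝ)) ≤
        Fintype.card V - ∑ i, (d i : ℝ)) :
    Arrows V (Sum.elim (Fin.cons P3 fun _ : Fin M ↦ C4) X) := by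
  obtain ⟨s, hs⟩ : ∃ s : ℤ, s = ∑ i, (d i : ℤ) := ⟨_, rfl⟩
  obtain ⟨y, hy⟩ : ∃ y : ℤ, y = Fintype.card V - s := ⟨_, rfl⟩
  have hs_cast : ∑ i, (d i : ℝ) = s := by simp [hs]
  have hy_cast : (Fintype.card V : ℝ) - s = y := by simp [hy]
  have hs_nonneg : 0 ≤ s := hs ▸ by positivity
  have hs_pos : (M : ℤ) + 1 = 1 → 0 < s := fun h ↦ by
    obtain ⟨i, hi⟩ := hM (by omega)
    exact hs ▸ Finset.sum_pos' (fun i _ ↦ by positivity)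
      ⟨i, Finset.mem_univ i, by exact_mod_cast hi⟩
  rw [hs_cast, hy_cast] at hV
  obtain ⟨hMy, hsy⟩ := le_and_sq_mul_le_of_root_le (by positivity) (by exact_mod_cast hs_nonneg) hV
  norm_cast at hMy hsy
  push_cast at hMy hsy
  have hgap := sub_one_sq_mul_lt_of_sq_mul_le (by omega) hs_pos hMy hsy
  have hy_lower : (M : ℤ) + 2 ≤ y := by nlinarith
  have : Nonempty V := Fintype.card_pos_iff.1 (by omega)
  refine arrows_cons_P3 (D := y - 2) hd (by omega) (by omega) ?_
  convert hgap using 1 <;> rw [hy] <;> ring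

section RamseyNumber

variable {l : List VGraph}

theorem ramseyProp_iff_arrows {ι : Type*} {Y : ι → VGraph} (e : ι ≃ Fin l.length)
    (he : ∀ i, l.get (e i) = Y i) {N : ℕ} : ramseyProp l N ↔ Arrows (Fin N) Y := by
  obtain rfl : (fun i ↦ l.get (e i)) = Y := funext he
  simp only [Arrows, isContained_colorClass_iff]
  constructor
  · intro h c
    obtain ⟨j, f, hf⟩ := h (e ∘ c)
    obtain ⟨i, rfl⟩ := e.surjective j
    exact ⟨i, f, fun u v huv ↦ e.injective (hf u v huv)⟩
  · intro h c
    obtain ⟨i, f, hf⟩ := h (e.symm ∘ c)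
    exact ⟨e i, f, fun u v huv ↦ e.symm_apply_eq.1 (hf u v huv)⟩

theorem ramseyProp_ofFn_append_ofFn {m n : ℕ} {A : Fin m → VGraph} {X : Fin n → VGraph} {N : ℕ} :
    ramseyProp (List.ofFn A ++ List.ofFn X) N ↔ Arrows (Fin N) (Sum.elim A X) := by
  rw [← List.ofFn_fin_append]
  refine ramseyProp_iff_arrows (finSumFinEquiv.trans (finCongr (by simp))) ?_
  rintro (i | i) <;> simp

theorem ramseyProp_replicate_append_ofFn {m n : ℕ} {Y : VGraph} {X : Fin n → VGraph} {N : ℕ} :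
    ramseyProp (List.replicate m Y ++ List.ofFn X) N ↔
      Arrows (Fin N) (Sum.elim (fun _ : Fin m ↦ Y) X) := by
  rw [← List.ofFn_const, ramseyProp_ofFn_append_ofFn]

theorem ramseyProp_cons_replicate_append_ofFn {m n : ℕ} {Y Z : VGraph} {X : Fin n → VGraph}
    {N : ℕ} : ramseyProp (Z :: (List.replicate m Y ++ List.ofFn X)) N ↔
      Arrows (Fin N) (Sum.elim (Fin.cons Z fun _ : Fin m ↦ Y) X) := by
  rw [← ramseyProp_ofFn_append_ofFn, List.ofFn_succ]
  simp

theorem ramseyProp.mono {M N : ℕ} (h : ramseyProp l M) (hMN : M ≤ N) : ramseyProp l N := by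
  rw [ramseyProp_iff_arrows (.refl _) fun _ ↦ rfl] at h ⊢
  exact h.of_embedding (Fin.castLEEmb hMN)

theorem ramseyNumber_le {N : ℕ} (hN : 0 < N) (h : ramseyProp l N) : ramseyNumber l ≤ N :=
  Nat.sInf_le ⟨hN, h⟩

theorem ramseyProp_of_ramseyNumber_le {N : ℕ} (hl : 0 < ramseyNumber l)
    (h : ramseyNumber l ≤ N) : ramseyProp l N :=
  (Nat.sInf_mem (Nat.nonempty_of_pos_sInf hl)).2.mono h

theorem ramseyNumber_pos {N : ℕ} (hN : 0 < N) (h : ramseyProp l N) : 0 < ramseyNumber l :=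
  (Nat.sInf_mem (s := {N | 0 < N ∧ ramseyProp l N}) ⟨N, hN, h⟩).1

theorem two_le_ramseyNumber (hl : l ≠ []) (h_nontrivial : ∀ Y ∈ l, Nontrivial Y.V)
    (h_pos : 0 < ramseyNumber l) : 2 ≤ ramseyNumber l := by
  by_contra! h
  obtain ⟨i, f, -⟩ := ramseyProp_of_ramseyNumber_le h_pos (Nat.lt_succ_iff.1 h)
    fun _ ↦ ⟨0, List.length_pos_of_ne_nil hl⟩
  have := h_nontrivial _ (l.get_mem i)
  exact not_subsingleton (l.get i).V f.injective.subsingleton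

theorem ne_bot_of_card_lt_ramseyNumber {Y : VGraph} [Fintype Y.V] [Nonempty Y.V] (hY : Y ∈ l)
    (h : Fintype.card Y.V < ramseyNumber l) : Y.G ≠ ⊥ := by
  obtain ⟨i, rfl⟩ := List.mem_iff_get.1 hY
  intro hbot
  exact h.not_ge <| ramseyNumber_le Fintype.card_pos fun _ ↦
    ⟨i, (Fintype.equivFin _).toEmbedding, fun _ _ huv ↦ (hbot.le huv).elim⟩

theorem ramseyNumber_update_delete_pos {m n : ℕ} {Y : VGraph} {X : Fin n → VGraph} {i : Fin n}
    (w : (X i).V) (h : 0 < ramseyNumber (List.replicate m Y ++ List.ofFn X)) :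
    0 < ramseyNumber
      (List.replicate m Y ++ List.ofFn (Function.update X i ((X i).delete w))) := by
  have hX := ramseyProp_of_ramseyNumber_le h le_rfl
  refine ramseyNumber_pos h ?_
  rw [ramseyProp_replicate_append_ofFn] at hX ⊢
  rw [Sum.elim_update_right]
  exact hX.of_isContained <| (Function.forall_update_iff (Sum.elim (fun _ ↦ Y) X)
    fun j Z ↦ Z.G ⊑ (Sum.elim (fun _ ↦ Y) X j).G).2 ⟨delete_isContained _ w, fun _ _ ↦ .rfl⟩

theorem nontrivial_delete {Y : VGraph} {w : Y.V} (hY : Y.G ≠ ⊥)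
    (hK2 : ¬ Nonempty (Y.G ≃g (⊤ : SimpleGraph (Fin 2)))) : Nontrivial (Y.delete w).V := by
  by_contra hnot
  have hsub : Subsingleton {x : Y.V // x ≠ w} := not_nontrivial_iff_subsingleton.1 hnot
  have eq_of_ne {x y : Y.V} (hx : x ≠ w) (hy : y ≠ w) : x = y :=
    congrArg Subtype.val (Subsingleton.elim (⟨x, hx⟩ : {x // x ≠ w}) ⟨y, hy⟩)
  obtain ⟨z, hz⟩ : ∃ z, Y.G.Adj w z := by
    obtain ⟨u, v, huv⟩ := ne_bot_iff_exists_adj.1 hY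
    rcases eq_or_ne u w with rfl | hu
    · exact ⟨v, huv⟩
    · have hv : v = w := by_contra fun hv ↦ huv.ne (eq_of_ne hu hv)
      exact ⟨u, hv ▸ huv.symm⟩
  have hcard : Nat.card Y.V = 2 :=
    (Nat.card_eq_two_iff' w).2 ⟨z, hz.ne', fun _ hx ↦ eq_of_ne hx hz.ne'⟩
  have htop : Y.G = ⊤ := by
    refine top_unique fun a b hab ↦ ?_
    rcases eq_or_ne a w with rfl | ha
    · rwa [eq_of_ne hab.ne' hz.ne']
    · have hb : b = w := by_contra fun hb ↦ hab.ne (eq_of_ne ha hb)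
      rw [hb, eq_of_ne ha hz.ne']
      exact hz.symm
  have : Finite Y.V := Nat.finite_of_card_ne_zero (by omega)
  exact hK2 ⟨htop ▸ Iso.completeGraph (Finite.equivFinOfCardEq hcard)⟩

theorem two_le_ramseyNumber_update_delete {m n : ℕ} {X : Fin n → VGraph} {i : Fin n} {w : (X i).V}
    (hX : ∀ j, (X j).G ≠ ⊥) (hK2 : ¬ Nonempty ((X i).G ≃g (⊤ : SimpleGraph (Fin 2))))
    (hpos : 0 < ramseyNumber
      (List.replicate m C4 ++ List.ofFn (Function.update X i ((X i).delete w)))) :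
    2 ≤ ramseyNumber
      (List.replicate m C4 ++ List.ofFn (Function.update X i ((X i).delete w))) := by
  refine two_le_ramseyNumber (fun h ↦ ?_) (fun Y hY ↦ ?_) hpos
  · have hn : n = 0 := List.ofFn_eq_nil_iff.1 (List.append_eq_nil_iff.1 h).2
    exact (hn ▸ i).elim0
  rcases List.mem_append.1 hY with hY | hY
  · rw [List.eq_of_mem_replicate hY]
    exact inferInstanceAs (Nontrivial (Fin 4))
  obtain ⟨j, rfl⟩ := List.mem_ofFn.1 hY
  rcases eq_or_ne j i with rfl | hj
  · rw [Function.update_self]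
    exact nontrivial_delete (hX j) hK2
  · rw [Function.update_of_ne hj]
    obtain ⟨u, v, huv⟩ := ne_bot_iff_exists_adj.1 (hX j)
    exact ⟨u, v, huv.ne⟩

theorem ramseyNumber_cons_P3_le {M n : ℕ} {X : Fin n → VGraph} {w : ∀ i, (X i).V} {d : Fin n → ℕ}
    (hd : ∀ i, ramseyProp (List.replicate (M + 1) C4 ++
      List.ofFn (Function.update X i ((X i).delete (w i)))) (d i + 1))
    (hM : M = 0 → ∃ i, 0 < d i) :
    ramseyNumber (P3 :: (List.replicate M C4 ++ List.ofFn X)) ≤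
      ∑ i, d i + (M + 2).choose 2 +
        ⌈((M : ℝ) + 1) * √(((M : ℝ) + 1 + 1) ^ 2 / 4 + ∑ i, (d i : ℝ))⌉₊ := by
  have hchoose : 0 < (M + 2).choose 2 := Nat.choose_pos (by omega)
  refine ramseyNumber_le (by omega) (ramseyProp_cons_replicate_append_ofFn.2 ?_)
  refine arrows_cons_P3_of_root_le (fun i ↦ ramseyProp_replicate_append_ofFn.1 (hd i)) hM ?_
  have hceil := Nat.le_ceil (((M : ℝ) + 1) * √(((M : ℝ) + 1 + 1) ^ 2 / 4 + ∑ i, (d i : ℝ)))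
  rw [Fintype.card_fin]
  push_cast [Nat.cast_choose_two]
  linarith

end RamseyNumber

/-- By `hpos` the Ramsey numbers bounded by `r` exist: `ramseyNumber`, an infimum in `ℕ`, is `0`
when no `N` works. -/
theorem statement2_general (m n : ℕ) (hm : 1 ≤ m) (X : Fin n → VGraph) (w : ∀ i, (X i).V)
    (r : Fin n → ℤ)
    (hr : ∀ i, (ramseyNumber (List.replicate m C4 ++
        List.ofFn (Function.update X i ((X i).delete (w i)))) : ℤ) ≤ r i)
    (hpos : ∀ i, 0 < ramseyNumber (List.replicate m C4 ++
        List.ofFn (Function.update X i ((X i).delete (w i)))))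
    (hr_two : m = 1 → ∃ i, 2 ≤ r i) :
    ((ramseyNumber (P3 :: (List.replicate (m - 1) C4 ++ List.ofFn X)) : ℝ)) ≤
      (∑ i, (r i : ℝ)) - n + ((m : ℝ) ^ 2 + m) / 2 +
      (⌈(m : ℝ) * Real.sqrt (((m : ℝ) + 1) ^ 2 / 4 + (∑ i, (r i : ℝ)) - n)⌉ : ℝ) := by
  obtain ⟨M, rfl⟩ := Nat.exists_eq_add_of_le' hm
  obtain ⟨d, hd⟩ : ∃ d : Fin n → ℕ, ∀ i, r i = d i + 1 := by
    refine ⟨fun i ↦ (r i - 1).toNat, fun i ↦ ?_⟩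
    have hr_pos : 0 < r i := (Int.natCast_pos.2 (hpos i)).trans_le (hr i)
    rw [Int.toNat_of_nonneg (by omega), sub_add_cancel]
  have hsum : ∑ i, (r i : ℝ) = ∑ i, (d i : ℝ) + n := by
    simp [hd, Finset.sum_add_distrib]
  have hbound := ramseyNumber_cons_P3_le (w := w) (d := d)
    (fun i ↦ ramseyProp_of_ramseyNumber_le (hpos i) (by have := hr i; have := hd i; omega))
    fun hM ↦ (hr_two (by omega)).imp fun i hi ↦ by have := hd i; omega
  rw [hsum, ← add_assoc, add_sub_cancel_right, add_sub_cancel_right,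
    ← natCast_ceil_eq_intCast_ceil (by positivity)]
  refine (Nat.cast_le.2 hbound).trans_eq ?_
  push_cast [Nat.cast_choose_two]
  ring

/-- Upper bound on `R(P₃, C₄,…,C₄ (m−1 copies), G₁,…,Gₙ)` in terms of bounds
`rᵢ` for the Ramsey numbers `R(C₄,…,C₄ (m copies), G₁,…,G'ᵢ,…,Gₙ)`. -/
theorem statement2 (m n : ℕ) (hm : 1 ≤ m) (X : Fin n → VGraph)
    [∀ i, Fintype (X i).V] (w : ∀ i, (X i).V) (r : Fin n → ℤ)
    (hr : ∀ i, (ramseyNumber (List.replicate m C4 ++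
        List.ofFn (Function.update X i ((X i).delete (w i)))) : ℤ) ≤ r i)
    (hmax : ∀ i, Fintype.card (X i).V <
        ramseyNumber (List.replicate m C4 ++ List.ofFn X))
    (hK2 : m = 1 → ∃ i, ¬ Nonempty ((X i).G ≃g (⊤ : SimpleGraph (Fin 2)))) :
    ((ramseyNumber (P3 :: (List.replicate (m - 1) C4 ++ List.ofFn X)) : ℝ)) ≤
      (∑ i, (r i : ℝ)) - n + ((m : ℝ) ^ 2 + m) / 2 +
      (⌈(m : ℝ) * Real.sqrt (((m : ℝ) + 1) ^ 2 / 4 + (∑ i, (r i : ℝ)) - n)⌉ : ℝ) := by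
  have hX (i : Fin n) : (X i).G ≠ ⊥ :=
    have : Nonempty (X i).V := ⟨w i⟩
    ne_bot_of_card_lt_ramseyNumber (List.mem_append_right _ (List.mem_ofFn.2 ⟨i, rfl⟩)) (hmax i)
  have hpos (i : Fin n) := ramseyNumber_update_delete_pos (w i) (Nat.zero_lt_of_lt (hmax i))
  exact statement2_general m n hm X w r hr hpos fun h ↦ (hK2 h).imp fun i hi ↦
    (Int.ofNat_le.2 (two_le_ramseyNumber_update_delete hX hi (hpos i))).trans (hr i)
end

section
/- Let m, n, k_1, …, k_n ≥ 1 be integers such that m + Σ_{i=1}^n k_i ≥ n + 2. Then R(C_4, …, C_4, K_{1,k_1}, …, K_{1,k_n}) (with m copies of C_4) ≤ 1 + (Σ_{i=1}^n k_i) − n + (m² + m)/2 + ⌈ m · √( (m+1)²/4 + (Σ_{i=1}^n k_i) − n ) ⌉. -/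
open SimpleGraph

/-!
Let `N` be the claimed bound and `s = ∑ kᵢ - n`. If a colouring of `K_N` avoids all the stars, every
vertex has at most `s` edges in the star colours, so some `C₄` colour class has average degree at
least `d = (N - 1 - s) / m`, and `N` is chosen so that `N - 1 ≤ d² - d`. Counting paths of length
two shows that a `C₄`-free graph of average degree at least `d` has `N - 1 ≥ d² - d`; equality would
make it `d`-regular with exactly one common neighbour for any two vertices. The adjacency matrix `A`
of such a graph satisfies `A² = J` modulo every prime `p ∣ d - 1`, where `J` is the all-ones matrix,
and comparing `tr Aᵖ` with `(tr A)ᵖ = 0` leaves only `d = 2`, which `m + s ≥ 2` excludes.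
-/

section StronglyRegular

variable {V : Type*} [Fintype V] {G : SimpleGraph V} [DecidableRel G.Adj]

lemma adjMatrix_mul_ones_of_isRegularOfDegree {R : Type*} [Semiring R] {k : ℕ}
    (h : G.IsRegularOfDegree k) :
    G.adjMatrix R * Matrix.of 1 = (k : R) • Matrix.of 1 := by
  ext u v
  simp [h u]

lemma adjMatrix_sq_of_isSRGWith_same [DecidableEq V] {R : Type*} [CommRing R] {n k ℓ : ℕ}
    (h : G.IsSRGWith n k ℓ ℓ) :
    G.adjMatrix R ^ 2 = ((k : R) - ℓ) • (1 : Matrix V V R) + (ℓ : R) • Matrix.of 1 := by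
  classical
  rw [h.matrix_eq, ← G.one_add_adjMatrix_add_compl_adjMatrix_eq_of_one (α := R),
    compl_adjMatrix_eq_adjMatrix_compl]
  module

theorem natCast_eq_zero_of_isSRGWith_same [Nonempty V] {n k ℓ p : ℕ} [Fact p.Prime]
    (h : G.IsSRGWith n k ℓ ℓ) (hk : (k : ZMod p) = ℓ) : (ℓ : ZMod p) = 0 := by
  classical
  set A := G.adjMatrix (ZMod p)
  set J : Matrix V V (ZMod p) := Matrix.of 1 with hJ
  have hAJ : A * J = (ℓ : ZMod p) • J := by
    rw [← hk]
    exact adjMatrix_mul_ones_of_isRegularOfDegree h.regular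
  have hsq : A ^ 2 = (ℓ : ZMod p) • J := by
    rw [adjMatrix_sq_of_isSRGWith_same h, hk, sub_self, zero_smul, zero_add]
  have hpow (j : ℕ) : A ^ (j + 2) = (ℓ : ZMod p) ^ (j + 1) • J := by
    induction j with
    | zero => simpa using hsq
    | succ j ih => rw [pow_succ', ih, Matrix.mul_smul, hAJ, smul_smul, ← pow_succ]
  obtain ⟨j, rfl⟩ := Nat.exists_eq_add_of_le' (Fact.out : p.Prime).two_le
  have htrace : (ℓ : ZMod (j + 2)) ^ (j + 1) * Fintype.card V = 0 := by
    have htrace_pow := ZMod.trace_pow_card A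
    rw [hpow, trace_adjMatrix, zero_pow (by omega), Matrix.trace_smul] at htrace_pow
    simpa only [hJ, Matrix.trace, Matrix.diag_apply, Matrix.of_apply, Pi.one_apply,
      Finset.sum_const, Finset.card_univ, nsmul_one, smul_eq_mul] using htrace_pow
  have hcard : (ℓ : ZMod (j + 2)) * ℓ = ℓ * Fintype.card V := by
    have : A * (A * J) = A ^ 2 * J := by rw [sq, mul_assoc]
    rw [hAJ, hsq, Matrix.mul_smul, hAJ] at this
    obtain ⟨v⟩ := ‹Nonempty V›
    simpa [hJ, Matrix.mul_apply] using congr_fun₂ this v v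
  have : (ℓ : ZMod (j + 2)) ^ (j + 2) = 0 := by
    rw [pow_succ, pow_succ, mul_assoc, hcard, ← mul_assoc, ← pow_succ, htrace]
  exact eq_zero_of_pow_eq_zero this

theorem degree_eq_zero_or_two_of_isSRGWith_one_one [Nonempty V] {n k : ℕ}
    (h : G.IsSRGWith n k 1 1) : k = 0 ∨ k = 2 := by
  by_contra! hk
  obtain ⟨p, hp, hpk⟩ := Nat.exists_prime_and_dvd (n := k - 1) (by omega)
  have : Fact p.Prime := ⟨hp⟩
  have hkp : (k : ZMod p) = (1 : ℕ) := by
    rw [← Nat.sub_add_cancel (Nat.one_le_iff_ne_zero.2 hk.1), Nat.cast_add,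
      (ZMod.natCast_eq_zero_iff _ _).2 hpk, zero_add]
  simpa using natCast_eq_zero_of_isSRGWith_same h hkp

end StronglyRegular

section FourCycleFree

variable {V : Type*} {G : SimpleGraph V}

lemma cycleGraph_four_isContained {u w v z : V} (huv : u ≠ v) (hwz : w ≠ z) (huw : G.Adj u w)
    (hwv : G.Adj w v) (hvz : G.Adj v z) (hzu : G.Adj z u) : cycleGraph 4 ⊑ G := by
  have hinj : Function.Injective ![u, w, v, z] := by
    rw [← List.nodup_ofFn]
    simp [huv, hwz, huw.ne, hwv.ne, hvz.ne, hzu.ne']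
  have hstep (x : Fin 4) : G.Adj (![u, w, v, z] x) (![u, w, v, z] (x + 1)) := by
    fin_cases x
    exacts [huw, hwv, hvz, hzu]
  refine isContained_iff_exists_le_comap.2 ⟨⟨_, hinj⟩, fun x y hxy ↦ ?_⟩
  obtain hxy | hyx := cycleGraph_adj.1 hxy
  · obtain rfl := sub_eq_iff_eq_add'.1 hxy
    exact (hstep y).symm
  · obtain rfl := sub_eq_iff_eq_add'.1 hyx
    exact hstep x

variable [Fintype V] [DecidableRel G.Adj]

lemma card_commonNeighbors_le_one_of_cycleGraph_four_free (hG : (cycleGraph 4).Free G) {u v : V}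
    (huv : u ≠ v) : Fintype.card (G.commonNeighbors u v) ≤ 1 := by
  refine Fintype.card_le_one_iff.2 fun ⟨w, huw, hvw⟩ ⟨z, huz, hvz⟩ ↦ Subtype.ext ?_
  by_contra! hwz
  exact hG (cycleGraph_four_isContained huv hwz huw hvw.symm hvz huz.symm)

lemma sum_offDiag_card_commonNeighbors :
    ∑ p ∈ Finset.univ.offDiag, (Fintype.card (G.commonNeighbors p.1 p.2) : ℝ) =
      ∑ v, ((G.degree v : ℝ) ^ 2 - G.degree v) := by
  have hdouble := Finset.sum_card_bipartiteAbove_eq_sum_card_bipartiteBelow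
    (s := Finset.univ.offDiag) (t := Finset.univ)
    fun (p : V × V) w ↦ w ∈ G.commonNeighbors p.1 p.2
  have hbelow (w : V) : Finset.univ.offDiag.bipartiteBelow
      (fun (p : V × V) w ↦ w ∈ G.commonNeighbors p.1 p.2) w = (G.neighborFinset w).offDiag := by
    ext p
    simp only [Finset.mem_bipartiteBelow, Finset.mem_offDiag, Finset.mem_univ, true_and,
      mem_commonNeighbors, mem_neighborFinset, G.adj_comm w]
    tauto
  simp only [hbelow, Finset.offDiag_card, card_neighborFinset_eq_degree,
    Finset.bipartiteAbove, ← Fintype.card_subtype] at hdouble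
  simp only [sq]
  simpa only [Nat.cast_sum, Nat.cast_sub (Nat.le_mul_self _), Nat.cast_mul] using
    congrArg (Nat.cast (R := ℝ)) hdouble

variable (G) in
-- If `G` is `C₄`-free with average degree at least `d ≥ 1 / 2`, no term on the left is negative.
lemma sum_sq_degree_sub_add_sum_offDiag (d : ℝ) :
    ∑ v, ((G.degree v : ℝ) - d) ^ 2 +
        ∑ p ∈ Finset.univ.offDiag, (1 - (Fintype.card (G.commonNeighbors p.1 p.2) : ℝ)) +
        (2 * d - 1) * (∑ v, (G.degree v : ℝ) - Fintype.card V * d) =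
      Fintype.card V * (Fintype.card V - 1 - (d ^ 2 - d)) := by
  have hoffDiag : ((Finset.univ : Finset V).offDiag.card : ℝ) =
      Fintype.card V * Fintype.card V - Fintype.card V := by
    rw [Finset.offDiag_card, Nat.cast_sub (Nat.le_mul_self _), Nat.cast_mul, Finset.card_univ]
  simp only [sub_sq, Finset.sum_add_distrib, Finset.sum_sub_distrib,
    sum_offDiag_card_commonNeighbors, Finset.sum_const, nsmul_eq_mul, hoffDiag, Finset.card_univ,
    ← Finset.mul_sum, ← Finset.sum_mul]
  ring

lemma degree_eq_and_card_commonNeighbors_eq_one (hG : (cycleGraph 4).Free G) {d : ℝ}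
    (hd : 1 / 2 ≤ d) (havg : Fintype.card V * d ≤ ∑ v, (G.degree v : ℝ))
    (hcard : (Fintype.card V : ℝ) - 1 ≤ d ^ 2 - d) :
    (∀ v, (G.degree v : ℝ) = d) ∧ ∀ u v, u ≠ v → Fintype.card (G.commonNeighbors u v) = 1 := by
  have hdegree_nonneg : ∀ v ∈ Finset.univ, 0 ≤ ((G.degree v : ℝ) - d) ^ 2 := fun _ _ ↦ sq_nonneg _
  have hcodegree_nonneg : ∀ p ∈ (Finset.univ : Finset V).offDiag,
      0 ≤ 1 - (Fintype.card (G.commonNeighbors p.1 p.2) : ℝ) := fun p hp ↦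
    sub_nonneg.2 <| Nat.cast_le_one.2 <|
      card_commonNeighbors_le_one_of_cycleGraph_four_free hG (Finset.mem_offDiag.1 hp).2.2
  have hsum_degree := Finset.sum_nonneg hdegree_nonneg
  have hsum_codegree := Finset.sum_nonneg hcodegree_nonneg
  have hexcess := mul_nonneg (by linarith : 0 ≤ 2 * d - 1) (sub_nonneg.2 havg)
  have hidentity := sum_sq_degree_sub_add_sum_offDiag G d
  have hrhs : (Fintype.card V : ℝ) * (Fintype.card V - 1 - (d ^ 2 - d)) ≤ 0 :=
    mul_nonpos_of_nonneg_of_nonpos (Nat.cast_nonneg _) (by linarith)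
  constructor
  · intro v
    have := (Finset.sum_eq_zero_iff_of_nonneg hdegree_nonneg).1 (by linarith) v (Finset.mem_univ v)
    exact sub_eq_zero.1 (sq_eq_zero_iff.1 this)
  · intro u v huv
    have := (Finset.sum_eq_zero_iff_of_nonneg hcodegree_nonneg).1 (by linarith) (u, v)
      (Finset.mem_offDiag.2 ⟨Finset.mem_univ u, Finset.mem_univ v, huv⟩)
    exact_mod_cast (sub_eq_zero.1 this).symm

theorem sq_sub_self_lt_of_cycleGraph_four_free [Nonempty V] (hG : (cycleGraph 4).Free G) {d : ℝ}
    (hd : 1 / 2 ≤ d) (hd_two : d ≠ 2) (havg : Fintype.card V * d ≤ ∑ v, (G.degree v : ℝ)) :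
    d ^ 2 - d < Fintype.card V - 1 := by
  classical
  by_contra! hcard
  obtain ⟨hdegree, hcodegree⟩ := degree_eq_and_card_commonNeighbors_eq_one hG hd havg hcard
  obtain ⟨v⟩ := ‹Nonempty V›
  have hsrg : G.IsSRGWith (Fintype.card V) (G.degree v) 1 1 :=
    { card := rfl
      regular := fun w ↦ Nat.cast_injective (R := ℝ) ((hdegree w).trans (hdegree v).symm)
      of_adj := fun _ _ hadj ↦ hcodegree _ _ hadj.ne
      of_not_adj := fun _ _ hne _ ↦ hcodegree _ _ hne }
  obtain hzero | htwo := degree_eq_zero_or_two_of_isSRGWith_one_one hsrg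
  · have := hdegree v
    rw [hzero, Nat.cast_zero] at this
    linarith
  · exact hd_two (by rw [← hdegree v, htwo, Nat.cast_ofNat])

end FourCycleFree

section Covering

variable {V ι κ : Type*} [Fintype V]

lemma starGraph_isContained_of_le_degree {G : SimpleGraph V} [DecidableRel G.Adj] {r : ℕ} {v : V}
    (hr : r ≤ G.degree v) : _root_.starGraph r ⊑ G := by
  obtain ⟨leaf⟩ : Nonempty (Fin r ↪ G.neighborSet v) := by
    rwa [Function.Embedding.nonempty_iff_card_le, Fintype.card_fin, card_neighborSet_eq_degree]
  have hinj : Function.Injective (Fin.cons v (fun x ↦ (leaf x : V)) : Fin (r + 1) → V) := by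
    refine Fin.cons_injective_iff.2 ⟨?_, Subtype.val_injective.comp leaf.injective⟩
    rintro ⟨x, hx⟩
    exact G.ne_of_adj (leaf x).2 hx.symm
  refine isContained_iff_exists_le_comap.2 ⟨⟨_, hinj⟩, fun x y hxy ↦ ?_⟩
  obtain ⟨hne, rfl | rfl⟩ := (fromRel_adj _ x y).1 hxy
  · obtain ⟨y, rfl⟩ := Fin.exists_succ_eq.2 hne.symm
    exact (leaf y).2
  · obtain ⟨x, rfl⟩ := Fin.exists_succ_eq.2 hne
    exact (leaf x).2.symm

lemma degree_iSup_le_sum_degree [Fintype ι] (G : ι → SimpleGraph V)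
    [∀ i, DecidableRel (G i).Adj] [DecidableRel (⨆ i, G i).Adj] (v : V) :
    (⨆ i, G i).degree v ≤ ∑ i, (G i).degree v := by
  classical
  calc (⨆ i, G i).degree v ≤ (Finset.univ.biUnion fun i ↦ (G i).neighborFinset v).card :=
        Finset.card_le_card fun w hw ↦ by simpa using hw
    _ ≤ ∑ i, (G i).degree v := Finset.card_biUnion_le

lemma card_le_sum_degree_add_one [Fintype ι] (G : ι → SimpleGraph V)
    [∀ i, DecidableRel (G i).Adj] (hG : ⨆ i, G i = ⊤) (v : V) :
    Fintype.card V ≤ ∑ i, (G i).degree v + 1 := by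
  classical
  have hdegree : (⨆ i, G i).degree v = Fintype.card V - 1 := by
    convert complete_graph_degree v
  have := degree_iSup_le_sum_degree G v
  omega

theorem exists_cycleGraph_four_or_starGraph_isContained [Nonempty V] [Fintype ι] [Nonempty ι]
    [Fintype κ] (G : ι → SimpleGraph V) (H : κ → SimpleGraph V) (k : κ → ℕ)
    (hcover : (⨆ j, G j) ⊔ ⨆ i, H i = ⊤) {d : ℝ} (hd : 1 / 2 ≤ d) (hd_two : d ≠ 2)
    (hd_le : Fintype.card ι * d + ∑ i, ((k i : ℝ) - 1) ≤ Fintype.card V - 1)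
    (hcard : (Fintype.card V : ℝ) - 1 ≤ d ^ 2 - d) :
    (∃ j, cycleGraph 4 ⊑ G j) ∨ ∃ i, _root_.starGraph (k i) ⊑ H i := by
  classical
  by_contra hfree
  obtain ⟨hG, hH⟩ := not_or.1 hfree
  have hstar (v : V) (i : κ) : ((H i).degree v : ℝ) ≤ k i - 1 := by
    have : (H i).degree v < k i :=
      not_le.1 fun hle ↦ hH ⟨i, starGraph_isContained_of_le_degree hle⟩
    rw [le_sub_iff_add_le]
    exact_mod_cast this
  have hdegree (v : V) : Fintype.card ι * d ≤ ∑ j, ((G j).degree v : ℝ) := by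
    have htotal : Fintype.card V ≤ ∑ j, (G j).degree v + ∑ i, (H i).degree v + 1 := by
      have := card_le_sum_degree_add_one (Sum.elim G H) (iSup_sum.trans hcover) v
      rwa [Fintype.sum_sum_type] at this
    have hstars := Finset.sum_le_sum fun i (_ : i ∈ Finset.univ) ↦ hstar v i
    rify at htotal
    linarith
  have havg : ∑ _j : ι, Fintype.card V * d ≤ ∑ j, ∑ v, ((G j).degree v : ℝ) := by
    rw [Finset.sum_comm]
    simpa [mul_left_comm] using Finset.sum_le_sum fun v (_ : v ∈ Finset.univ) ↦ hdegree v
  obtain ⟨j, -, hj⟩ := Finset.exists_le_of_sum_le Finset.univ_nonempty havg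
  exact hcard.not_gt <|
    sq_sub_self_lt_of_cycleGraph_four_free (not_exists.1 hG j) hd hd_two hj

end Covering

section Ramsey

lemma ramseyProp_of_forall_topEdgeLabeling {l : List VGraph} {N : ℕ}
    (h : ∀ C : TopEdgeLabeling (Fin N) (Fin l.length), ∃ i, (l.get i).G ⊑ C.labelGraph i) :
    ramseyProp l N := by
  intro c
  let C : TopEdgeLabeling (Fin N) (Fin l.length) := fun e ↦ c e
  obtain ⟨i, hi⟩ := h C
  obtain ⟨f, hf⟩ := isContained_iff_exists_le_comap.1 hi
  refine ⟨i, f, fun u v huv ↦ ?_⟩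
  obtain ⟨_, hcolor⟩ := (TopEdgeLabeling.labelGraph_adj (C := C) (f u) (f v)).1 (hf huv)
  exact hcolor

/-- The list `C₄, …, C₄, K_{1,k₁}, …, K_{1,kₙ}` of forbidden graphs, with `m` copies of `C₄`. -/
def fourCyclesAndStars (m : ℕ) {n : ℕ} (k : Fin n → ℕ) : List VGraph :=
  List.replicate m C4 ++ List.ofFn fun i ↦ ⟨Fin (k i + 1), _root_.starGraph (k i)⟩

lemma length_fourCyclesAndStars (m : ℕ) {n : ℕ} (k : Fin n → ℕ) :
    (fourCyclesAndStars m k).length = m + n := by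
  simp [fourCyclesAndStars]

lemma get_fourCyclesAndStars_castAdd {m n : ℕ} (k : Fin n → ℕ) (j : Fin m) :
    (fourCyclesAndStars m k).get
      ((j.castAdd n).cast (length_fourCyclesAndStars m k).symm) = C4 :=
  (List.getElem_append_left (by simp)).trans (List.getElem_replicate (by simp))

lemma get_fourCyclesAndStars_natAdd (m : ℕ) {n : ℕ} (k : Fin n → ℕ) (i : Fin n) :
    (fourCyclesAndStars m k).get ((i.natAdd m).cast (length_fourCyclesAndStars m k).symm) =
      ⟨Fin (k i + 1), _root_.starGraph (k i)⟩ :=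
  (List.getElem_append_right (by simp)).trans (by simp)

theorem ramseyProp_fourCyclesAndStars {m n N : ℕ} [NeZero m] [NeZero N] (k : Fin n → ℕ) {d : ℝ}
    (hd : 1 / 2 ≤ d) (hd_two : d ≠ 2) (hd_le : m * d + ∑ i, ((k i : ℝ) - 1) ≤ N - 1)
    (hN : (N : ℝ) - 1 ≤ d ^ 2 - d) : ramseyProp (fourCyclesAndStars m k) N := by
  refine ramseyProp_of_forall_topEdgeLabeling fun C ↦ ?_
  let e : Fin m ⊕ Fin n ≃ Fin (fourCyclesAndStars m k).length :=
    finSumFinEquiv.trans (finCongr (length_fourCyclesAndStars m k).symm)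
  have hcover : (⨆ j, C.labelGraph (e (.inl j))) ⊔ ⨆ i, C.labelGraph (e (.inr i)) = ⊤ := by
    rw [← iSup_sum (f := fun x ↦ C.labelGraph (e x)), e.iSup_comp (g := C.labelGraph),
      C.iSup_labelGraph]
  obtain ⟨j, hj⟩ | ⟨i, hi⟩ := exists_cycleGraph_four_or_starGraph_isContained _ _ k hcover hd
    hd_two (by simpa using hd_le) (by simpa using hN)
  · exact ⟨e (.inl j), (get_fourCyclesAndStars_castAdd k j).symm ▸ hj⟩
  · exact ⟨e (.inr i), (get_fourCyclesAndStars_natAdd m k i).symm ▸ hi⟩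

lemma mul_add_le_sq_sub_self_of_sqrt_le {m s d : ℝ}
    (h : √((m + 1) ^ 2 / 4 + s) ≤ d - (m + 1) / 2) : m * d + s ≤ d ^ 2 - d := by
  linarith [(Real.sqrt_le_iff.1 h).2]

theorem ramseyNumber_fourCyclesAndStars_le {m n N : ℕ} (k : Fin n → ℕ) (hm : 1 ≤ m)
    (h : n + 2 ≤ m + ∑ i, k i) {d : ℝ}
    (hd : √(((m : ℝ) + 1) ^ 2 / 4 + (∑ i, (k i : ℝ) - n)) ≤ d - (m + 1) / 2)
    (hN : (N : ℝ) = 1 + (∑ i, (k i : ℝ) - n) + m * d) :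
    ramseyNumber (fourCyclesAndStars m k) ≤ N := by
  have hm' : (1 : ℝ) ≤ m := by exact_mod_cast hm
  have h' : (n : ℝ) + 2 ≤ m + ∑ i, (k i : ℝ) := by exact_mod_cast h
  have hquadratic := mul_add_le_sq_sub_self_of_sqrt_le hd
  have hd_ge : ((m : ℝ) + 1) / 2 ≤ d := sub_nonneg.1 ((Real.sqrt_nonneg _).trans hd)
  have hd_two : d ≠ 2 := by
    rintro rfl
    linarith
  have hN_pos : 0 < N := by
    rw [← Nat.cast_pos (α := ℝ)]
    nlinarith
  have : NeZero m := ⟨by omega⟩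
  have : NeZero N := ⟨hN_pos.ne'⟩
  refine Nat.sInf_le ⟨hN_pos, ramseyProp_fourCyclesAndStars k (by linarith) hd_two ?_
    (by linarith)⟩
  simp only [Finset.sum_sub_distrib, Finset.sum_const, Finset.card_univ, Fintype.card_fin,
    nsmul_one]
  linarith

end Ramsey

/-- Upper bound on `R(C₄,…,C₄ (m copies), K_{1,k₁},…,K_{1,kₙ})`. -/
theorem statement6 (m n : ℕ) (k : Fin n → ℕ) (hm : 1 ≤ m) (hn : 1 ≤ n)
    (hk : ∀ i, 1 ≤ k i) (h : n + 2 ≤ m + ∑ i, k i) :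
    ((ramseyNumber (List.replicate m C4 ++
        List.ofFn (fun i => (⟨Fin (k i + 1), starGraph (k i)⟩ : VGraph))) : ℝ)) ≤
      1 + (∑ i, (k i : ℝ)) - n + ((m : ℝ) ^ 2 + m) / 2 +
      (⌈(m : ℝ) * Real.sqrt (((m : ℝ) + 1) ^ 2 / 4 + (∑ i, (k i : ℝ)) - n)⌉ : ℝ) := by
  rw [add_sub_assoc, add_sub_assoc]
  set x := √(((m : ℝ) + 1) ^ 2 / 4 + (∑ i, (k i : ℝ) - n)) with hx
  have hm_pos : (0 : ℝ) < m := by exact_mod_cast hm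
  obtain ⟨N, hN⟩ : ∃ N : ℕ, (N : ℝ) =
      1 + (∑ i, (k i : ℝ) - n) + ((m : ℝ) ^ 2 + m) / 2 + (⌈m * x⌉ : ℝ) := by
    refine ⟨1 + ∑ i, (k i - 1) + (m + 1).choose 2 + ⌈m * x⌉₊, ?_⟩
    have hceil : (⌈m * x⌉₊ : ℝ) = ⌈m * x⌉ := natCast_ceil_eq_intCast_ceil (by positivity)
    push_cast [Nat.cast_sub (hk _), Nat.cast_choose_two, hceil, Finset.sum_sub_distrib]
    simp only [Finset.sum_const, Finset.card_univ, Fintype.card_fin, nsmul_one]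
    ring
  rw [← hN, Nat.cast_le]
  refine ramseyNumber_fourCyclesAndStars_le k hm h (d := (m + 1) / 2 + ⌈m * x⌉ / m) ?_ ?_
  · rw [← hx, add_sub_cancel_left, le_div_iff₀' hm_pos]
    exact Int.le_ceil _
  · rw [hN]
    field_simp
    ring
end
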